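/- arXiv:2410.08859 — 3 statements merged into one kernel-verified Lean document; each statement's English description precedes it below -/
import Mathlib

section
/- Let Z be a nonempty finite set and let φ: ℝ → ℝ ∪ {+∞} be an entropy function with recession slope φ'_∞ := lim_{x→∞} φ(x)/x. Then the associated divergence (ρ, σ) ↦ D_φ(ρ|σ) := Σ_{z: σ(z)>0} σ(z)·φ(ρ(z)/σ(z)) + φ'_∞ · Σ_{z: σ(z)=0} ρ(z) is jointly lower semicontinuous on the set of pairs of nonnegative functions ρ, σ: Z → ℝ≥0 (with the pointwise/product topology on (ℝ≥0)^Z × (ℝ≥0)^Z and values in ℝ ∪ {+∞}). -/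
open Filter Topology

noncomputable section

/-- `φ : ℝ → ℝ ∪ {+∞}` is an entropy function: lower semicontinuous, convex,
`dom(φ) ⊆ [0,∞)`, `dom(φ)\{0} ≠ ∅`, never taking the value `-∞`. -/
def IsEntropyFn (φ : ℝ → EReal) : Prop :=
  LowerSemicontinuous φ ∧
  (∀ x y a b : ℝ, 0 ≤ a → 0 ≤ b → a + b = 1 →
      φ (a * x + b * y) ≤ (a : EReal) * φ x + (b : EReal) * φ y) ∧
  (∀ x : ℝ, φ x ≠ ⊥) ∧
  (∀ x : ℝ, φ x < ⊤ → 0 ≤ x) ∧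
  (∃ x : ℝ, x ≠ 0 ∧ φ x < ⊤)

/-- The recession slope `φ'_∞ = lim_{x→∞} φ(x)/x`. -/
def recessionSlope (φ : ℝ → EReal) : EReal :=
  Filter.limsup (fun x : ℝ => φ x * ((x⁻¹ : ℝ) : EReal)) Filter.atTop

/-- The `φ`-divergence on a finite set `Z`. -/
def divergence {Z : Type*} [Fintype Z] (φ : ℝ → EReal) (ρ σ : Z → ℝ) : EReal :=
  (∑ z, if 0 < σ z then (σ z : EReal) * φ (ρ z / σ z) else 0)
    + recessionSlope φ * ((∑ z, if σ z = 0 then ρ z else 0 : ℝ) : EReal)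

lemma aux_A (φ : ℝ → EReal) (hφ : IsEntropyFn φ) (x0 x1 c t : ℝ) (h0 : φ x0 = c) (h01 : x0 < x1)
    (h1 : ((c + t * (x1 - x0) : ℝ) : EReal) ≤ φ x1) (x : ℝ) (hx : x1 ≤ x) :
    ((c + t * (x - x0) : ℝ) : EReal) ≤ φ x := by
  obtain ⟨-, hc, hb, -, -⟩ := hφ
  have hxx : 0 < x - x0 := by linarith
  have key := hc x0 x ((x - x1) / (x - x0)) ((x1 - x0) / (x - x0))
    (div_nonneg (by linarith) hxx.le) (div_nonneg (by linarith) hxx.le) (by field_simp; ring)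
  have e : (x - x1) / (x - x0) * x0 + (x1 - x0) / (x - x0) * x = x1 := by
    field_simp; ring
  rw [e, h0] at key
  have key2 := h1.trans key
  induction hv : φ x using EReal.rec with
  | bot => exact absurd hv (hb x)
  | top => exact le_top
  | coe v =>
    rw [hv] at key2
    norm_cast at key2 ⊢
    have h3 : (c + t * (x1 - x0)) * (x - x0) ≤ (x - x1) * c + (x1 - x0) * v := by
      have := mul_le_mul_of_nonneg_right key2 hxx.le
      have e2 : ((x - x1) / (x - x0) * c + (x1 - x0) / (x - x0) * v) * (x - x0)
          = (x - x1) * c + (x1 - x0) * v := by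
        field_simp
      exact this.trans_eq e2
    have h4 : 0 ≤ (x1 - x0) * (v - (c + t * (x - x0))) := by nlinarith
    have := nonneg_of_mul_nonneg_right h4 (by linarith)
    linarith

lemma aux_B (φ : ℝ → EReal) (hφ : IsEntropyFn φ) (x0 x1 c t : ℝ) (h0 : φ x0 = c) (h01 : x0 < x1)
    (hx0 : 0 < x0)
    (h1 : ((c + t * (x1 - x0) : ℝ) : EReal) ≤ φ x1) :
    ∃ b : ℝ, ∀ x, ((t * x + b : ℝ) : EReal) ≤ φ x := by
  have hA := aux_A φ hφ x0 x1 c t h0 h01 h1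
  obtain ⟨hl, hc, hb, hd, -⟩ := hφ
  obtain ⟨y, hy, hmin⟩ := (hl.lowerSemicontinuousOn (Set.Icc 0 x1)).exists_isMinOn
    (Set.nonempty_Icc.2 (by linarith)) isCompact_Icc
  obtain ⟨m, -, hm⟩ := EReal.lt_iff_exists_real_btwn.1 (bot_lt_iff_ne_bot.2 (hb y))
  refine ⟨min (c - t * x0) (m - |t| * x1), fun x => ?_⟩
  by_cases hx : 0 ≤ x
  · by_cases hx1 : x1 ≤ x
    · refine le_trans ?_ (hA x hx1)
      norm_cast
      have := min_le_left (c - t * x0) (m - |t| * x1)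
      linarith
    · refine le_trans (le_trans ?_ hm.le) (hmin ⟨hx, (not_le.1 hx1).le⟩)
      norm_cast
      have := min_le_right (c - t * x0) (m - |t| * x1)
      have h2 : t * x ≤ |t| * x := mul_le_mul_of_nonneg_right (le_abs_self t) hx
      have h3 : |t| * x ≤ |t| * x1 := mul_le_mul_of_nonneg_left (not_le.1 hx1).le (abs_nonneg t)
      linarith
  · have : φ x = ⊤ := by
      by_contra h
      exact hx (hd x (lt_top_iff_ne_top.2 h))
    rw [this]; exact le_top

lemma aux_pt (φ : ℝ → EReal) (hφ : IsEntropyFn φ) : ∃ x0 c : ℝ, 0 < x0 ∧ φ x0 = c := by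
  obtain ⟨hl, hc, hb, hd, x, hx, hxt⟩ := hφ
  exact ⟨x, (φ x).toReal, lt_of_le_of_ne (hd x hxt) hx.symm, (EReal.coe_toReal hxt.ne (hb x)).symm⟩

lemma aux_bot (φ : ℝ → EReal) (hφ : IsEntropyFn φ) : ∃ t : ℝ, (t : EReal) < recessionSlope φ := by
  obtain ⟨x0, c, hx0, h0⟩ := aux_pt φ hφ
  obtain ⟨m, -, hm⟩ := EReal.lt_iff_exists_real_btwn.1 (bot_lt_iff_ne_bot.2 (hφ.2.2.1 (x0+1)))
  obtain ⟨b, hb⟩ := aux_B φ hφ x0 (x0+1) c (m - c) h0 (by linarith) hx0 (by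
    refine le_trans (le_of_eq ?_) hm.le
    congr 1; ring)
  refine ⟨m - c - 2, lt_of_lt_of_le (b := ((m - c - 1 : ℝ) : EReal)) (by norm_cast; linarith) ?_⟩
  refine le_limsup_of_frequently_le (Eventually.frequently ?_) (by isBoundedDefault)
  filter_upwards [eventually_ge_atTop (max 1 |b|)] with x hx
  have h1 : 1 ≤ x := (le_max_left _ _).trans hx
  have h2 : |b| ≤ x := (le_max_right _ _).trans hx
  have hpos : 0 < x := by linarith
  refine le_trans ?_ (mul_le_mul_of_nonneg_right (hb x) (by exact_mod_cast (inv_pos.2 hpos).le))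
  norm_cast
  rw [← div_eq_mul_inv, le_div_iff₀ hpos]
  have := neg_abs_le b
  linarith

lemma aux_D (φ : ℝ → EReal) (hφ : IsEntropyFn φ) (t : ℝ) (ht : (t : EReal) < recessionSlope φ) :
    ∃ b : ℝ, ∀ x, ((t * x + b : ℝ) : EReal) ≤ φ x := by
  obtain ⟨x0, c, hx0, h0⟩ := aux_pt φ hφ
  obtain ⟨t', h1, h2⟩ := EReal.lt_iff_exists_real_btwn.1 ht
  have hf := frequently_lt_of_lt_limsup (by isBoundedDefault) h2
  have htt : t < t' := by exact_mod_cast h1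
  obtain ⟨x, hx, hg⟩ := (hf.and_eventually
    (eventually_ge_atTop (max (x0 + 1) ((c - t * x0) / (t' - t))))).exists
  have h3 : x0 + 1 ≤ x := (le_max_left _ _).trans hg
  have h4 := (le_max_right _ _).trans hg
  rw [div_le_iff₀ (by linarith)] at h4
  have hpos : 0 < x := by linarith
  refine aux_B φ hφ x0 x c t h0 (by linarith) hx0 ?_
  induction hv : φ x using EReal.rec with
  | bot => exact absurd hv (hφ.2.2.1 x)
  | top => exact le_top
  | coe v =>
    rw [hv] at hx
    norm_cast at hx ⊢
    rw [← div_eq_mul_inv, lt_div_iff₀ hpos] at hx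
    linarith

def auxF (φ : ℝ → EReal) (r s : ℝ) : EReal :=
  (if 0 < s then (s : EReal) * φ (r / s) else 0)
    + recessionSlope φ * ((if s = 0 then r else 0 : ℝ) : EReal)

lemma auxF_ge (φ : ℝ → EReal) (t b : ℝ) (ht : (t : EReal) ≤ recessionSlope φ)
    (hb : ∀ x, ((t * x + b : ℝ) : EReal) ≤ φ x) (r s : ℝ) (hr : 0 ≤ r) (hs : 0 ≤ s) :
    ((t * r + b * s : ℝ) : EReal) ≤ auxF φ r s := by
  unfold auxF
  rcases hs.eq_or_lt with h | h
  · subst h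
    simp only [lt_irrefl, if_false, if_true, zero_add, mul_zero, add_zero, EReal.coe_mul]
    exact mul_le_mul_of_nonneg_right ht (by exact_mod_cast hr)
  · simp only [h, h.ne', if_true, if_false, EReal.coe_zero, mul_zero, add_zero]
    refine le_trans ?_ (mul_le_mul_of_nonneg_left (hb (r / s)) (by exact_mod_cast h.le))
    norm_cast
    apply le_of_eq
    field_simp

lemma auxF_ne_bot (φ : ℝ → EReal) (hφ : IsEntropyFn φ) (r s : ℝ) (hr : 0 ≤ r) (hs : 0 ≤ s) :
    auxF φ r s ≠ ⊥ := by
  obtain ⟨t, ht⟩ := aux_bot φ hφ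
  obtain ⟨b, hb⟩ := aux_D φ hφ t ht
  exact ((EReal.bot_lt_coe _).trans_le (auxF_ge φ t b ht.le hb r s hr hs)).ne'

lemma aux_t (φ : ℝ → EReal) (hφ : IsEntropyFn φ) (r : ℝ) (hr : 0 ≤ r) (y : EReal)
    (hy : y < recessionSlope φ * (r : EReal)) :
    ∃ t : ℝ, (t : EReal) < recessionSlope φ ∧ y < ((t * r : ℝ) : EReal) := by
  obtain ⟨t0, ht0⟩ := aux_bot φ hφ
  rcases hr.eq_or_lt with h | h
  · subst h
    exact ⟨t0, ht0, by simpa using hy⟩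
  · obtain ⟨c, hc, hc2⟩ := EReal.lt_iff_exists_real_btwn.1 hy
    have : ((c / r : ℝ) : EReal) < recessionSlope φ := by
      induction hv : recessionSlope φ using EReal.rec with
      | bot => simp [hv] at ht0
      | top => exact EReal.coe_lt_top _
      | coe v =>
        rw [hv] at hc2
        norm_cast at hc2 ⊢
        rwa [div_lt_iff₀ h]
    refine ⟨c / r, this, ?_⟩
    rwa [div_mul_cancel₀ _ h.ne']

lemma auxF_lsc (φ : ℝ → EReal) (hφ : IsEntropyFn φ) :
    LowerSemicontinuousOn (fun p : ℝ × ℝ => auxF φ p.1 p.2) {p | 0 ≤ p.1 ∧ 0 ≤ p.2} := by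
  rintro ⟨r, s⟩ ⟨hr, hs⟩ y hy
  simp only at hr hs hy
  rcases hs.eq_or_lt with h | h
  · subst h
    have hy' : y < recessionSlope φ * (r : EReal) := by simpa [auxF] using hy
    obtain ⟨t, ht, hyt⟩ := aux_t φ hφ r hr y hy'
    obtain ⟨b, hb⟩ := aux_D φ hφ t ht
    have hcont : Tendsto (fun p : ℝ × ℝ => ((t * p.1 + b * p.2 : ℝ) : EReal)) (𝓝 (r, 0))
        (𝓝 ((t * r + b * 0 : ℝ) : EReal)) := by
      have : Continuous (fun p : ℝ × ℝ => ((t * p.1 + b * p.2 : ℝ) : EReal)) :=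
        continuous_coe_real_ereal.comp (by fun_prop)
      exact this.tendsto (r, 0)
    have hev := hcont.eventually (lt_mem_nhds (a := y) (by simpa using hyt))
    filter_upwards [mem_nhdsWithin_of_mem_nhds hev, self_mem_nhdsWithin] with p hp hp2
    exact lt_of_lt_of_le hp (auxF_ge φ t b ht.le hb _ _ hp2.1 hp2.2)
  · apply mem_nhdsWithin_of_mem_nhds
    have hF : ∀ r s : ℝ, 0 < s → auxF φ r s = (s : EReal) * φ (r / s) := by
      intro r s h
      simp [auxF, h, h.ne']
    rw [hF _ _ h] at hy
    -- real `v < φ (r/s)` with `y < s v`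
    obtain ⟨v, hv, hyv⟩ : ∃ v : ℝ, (v : EReal) < φ (r / s) ∧ y < ((s * v : ℝ) : EReal) := by
      obtain ⟨c, hc, hc2⟩ := EReal.lt_iff_exists_real_btwn.1 hy
      refine ⟨c / s, ?_, by rwa [mul_div_cancel₀ _ h.ne']⟩
      induction hv : φ (r / s) using EReal.rec with
      | bot => exact absurd hv (hφ.2.2.1 _)
      | top => exact EReal.coe_lt_top _
      | coe v =>
        rw [hv] at hc2
        norm_cast at hc2 ⊢
        rw [div_lt_iff₀ h]; linarith
    have hq : ContinuousAt (fun p : ℝ × ℝ => p.1 / p.2) (r, s) :=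
      continuousAt_fst.div continuousAt_snd h.ne'
    have e1 := hq.eventually (hφ.1 (r / s) v hv)
    have hcont : Continuous (fun p : ℝ × ℝ => ((p.2 * v : ℝ) : EReal)) :=
      continuous_coe_real_ereal.comp (by fun_prop)
    have e2 := (hcont.tendsto (r, s)).eventually (lt_mem_nhds hyv)
    have e3 := (continuous_snd.tendsto (r, s)).eventually (lt_mem_nhds h)
    filter_upwards [e1, e2, e3] with p h1 h2 h3
    show y < auxF φ p.1 p.2
    rw [hF _ _ h3]
    refine lt_of_lt_of_le h2 ?_
    rw [EReal.coe_mul]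
    exact mul_le_mul_of_nonneg_left h1.le (by exact_mod_cast h3.le)

lemma aux_mul_sum {Z : Type*} (S : Finset Z) (a : EReal) (g : Z → ℝ) (hg : ∀ z, 0 ≤ g z) :
    a * ((∑ z ∈ S, g z : ℝ) : EReal) = ∑ z ∈ S, a * (g z : EReal) := by
  classical
  induction S using Finset.induction_on with
  | empty => simp
  | insert z S hz ih =>
    rw [Finset.sum_insert hz, Finset.sum_insert hz, ← ih, EReal.coe_add]
    exact EReal.left_distrib_of_nonneg (by exact_mod_cast hg z)
      (by exact_mod_cast Finset.sum_nonneg fun i _ => hg i)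

lemma aux_sum_ne_bot {Z : Type*} (S : Finset Z) (g : Z → EReal) (hg : ∀ z, g z ≠ ⊥) :
    ∑ z ∈ S, g z ≠ ⊥ := by
  classical
  induction S using Finset.induction_on with
  | empty => simp
  | insert z S hz ih =>
    rw [Finset.sum_insert hz, Ne, EReal.add_eq_bot_iff, not_or]
    exact ⟨hg z, ih⟩

lemma aux_sum_lsc {Z X : Type*} [TopologicalSpace X] (A : Set X) (S : Finset Z) (g : Z → X → EReal)
    (hg : ∀ z, ∀ x ∈ A, g z x ≠ ⊥) (hl : ∀ z, LowerSemicontinuousOn (g z) A) :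
    LowerSemicontinuousOn (fun x => ∑ z ∈ S, g z x) A := by
  classical
  induction S using Finset.induction_on with
  | empty => simpa using lowerSemicontinuousOn_const
  | insert z S hz ih =>
    simp only [Finset.sum_insert hz]
    refine (hl z).add' ih fun x hx => ?_
    exact EReal.continuousAt_add (Or.inr (aux_sum_ne_bot S _ fun z => hg z x hx))
      (Or.inl (hg z x hx))

/-- for an entropy function `φ` on a nonempty finite set `Z`, the
divergence `(ρ, σ) ↦ D_φ(ρ|σ)` is jointly lower semicontinuous on the set of pairs
of nonnegative functions (with the product topology). -/
theorem divergence_jointly_lsc {Z : Type*} [Fintype Z] [Nonempty Z]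
    (φ : ℝ → EReal) (hφ : IsEntropyFn φ) :
    LowerSemicontinuousOn
      (fun p : (Z → ℝ) × (Z → ℝ) => divergence φ p.1 p.2)
      {p : (Z → ℝ) × (Z → ℝ) | (∀ z, 0 ≤ p.1 z) ∧ ∀ z, 0 ≤ p.2 z} := by
  have main := aux_sum_lsc {p : (Z → ℝ) × (Z → ℝ) | (∀ z, 0 ≤ p.1 z) ∧ ∀ z, 0 ≤ p.2 z}
    Finset.univ (fun z p => auxF φ (p.1 z) (p.2 z))
    (fun z p hp => auxF_ne_bot φ hφ _ _ (hp.1 z) (hp.2 z)) (fun z p hp y hy => by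
      have hc : Continuous (fun p : (Z → ℝ) × (Z → ℝ) => (p.1 z, p.2 z)) := by fun_prop
      have := auxF_lsc φ hφ (p.1 z, p.2 z) ⟨hp.1 z, hp.2 z⟩ y hy
      have ht : Tendsto (fun p : (Z → ℝ) × (Z → ℝ) => (p.1 z, p.2 z))
          (𝓝[{p : (Z → ℝ) × (Z → ℝ) | (∀ z, 0 ≤ p.1 z) ∧ ∀ z, 0 ≤ p.2 z}] p)
          (𝓝[{p : ℝ × ℝ | 0 ≤ p.1 ∧ 0 ≤ p.2}] (p.1 z, p.2 z)) :=
        hc.continuousWithinAt.tendsto_nhdsWithin (fun q hq => ⟨hq.1 z, hq.2 z⟩)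
      exact ht.eventually this)
  have heq : ∀ p ∈ {p : (Z → ℝ) × (Z → ℝ) | (∀ z, 0 ≤ p.1 z) ∧ ∀ z, 0 ≤ p.2 z},
      divergence φ p.1 p.2 = ∑ z, auxF φ (p.1 z) (p.2 z) := by
    intro p hp
    unfold divergence auxF
    rw [aux_mul_sum, Finset.sum_add_distrib]
    intro z
    split_ifs
    exacts [hp.1 z, le_rfl]
  intro p hp y hy
  simp only [heq p hp] at hy
  filter_upwards [main p hp y hy, self_mem_nhdsWithin] with q hq hq2
  simpa only [heq q hq2] using hq

end
end

section
/- Let X_J, Y, μ_J, ν, c, ε, φ₁, φ₂ (satisfying Assumption A), D₁, D₂ be as in the unbalanced cell subproblem, and let M ≥ 0. Then there exists a constant C < ∞, depending only on μ_J, ν, c, ε, φ₁, φ₂ and M (but not on ν_{-J}), such that for every ν_{-J}: Y → ℝ≥0 with 0 ≤ ν_{-J}(y) ≤ M·ν(y) for all y, the unique maximizer (α_J, β_J) of the dual objective D_J(·,·|ν_{-J}) satisfies max_{x} |α_J(x)| ≤ C and max_{y} |β_J(y)| ≤ C. -/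
open Filter Topology
open scoped Classical

noncomputable section

/-- The convex conjugate `φ*(z) = sup_{x ∈ ℝ} (z·x − φ(x))`. -/
def conjFn (φ : ℝ → EReal) (z : ℝ) : EReal :=
  ⨆ x : ℝ, (((z * x : ℝ) : EReal) - φ x)

/-- Kullback–Leibler divergence on a finite set, with `0·log 0 = 0`:
`KL(ρ|σ) = ∑ z (ρ z log(ρ z/σ z) − ρ z + σ z)` if `ρ ≪ σ`, else `+∞`. -/
def KLfin {Z : Type*} [Fintype Z] (ρ σ : Z → ℝ) : EReal :=
  if ∀ z, σ z = 0 → ρ z = 0 then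
    ((∑ z, (ρ z * Real.log (ρ z / σ z) - ρ z + σ z) : ℝ) : EReal)
  else ⊤

/-- Assumption A: the entropy function `φ` is nonnegative, finite on `[0,∞)`,
and continuously differentiable on the interior `(0,∞)` of its domain. -/
def AssumptionA (φ : ℝ → EReal) : Prop :=
  IsEntropyFn φ ∧ (∀ x : ℝ, 0 ≤ φ x) ∧ (∀ x : ℝ, 0 ≤ x → φ x ≠ ⊤) ∧
  ContDiffOn ℝ 1 (fun s : ℝ => (φ s).toReal) (Set.Ioi (0 : ℝ))

/-- Primal objective of the unbalanced (cell) problem with `Y`-submarginal `νm`: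
`E_J(π|νm) = ⟨c, π⟩ + ε KL(π | μ⊗ν) + D_{φ₁}(P_X π | μ) + D_{φ₂}(P_Y π + νm | ν)`. -/
def EJfun {W Y : Type*} [Fintype W] [Fintype Y]
    (c : W → Y → ℝ) (ε : ℝ) (φ₁ φ₂ : ℝ → EReal)
    (μ : W → ℝ) (ν : Y → ℝ) (νm : Y → ℝ) (π : W → Y → ℝ) : EReal :=
  ((∑ x, ∑ y, c x y * π x y : ℝ) : EReal)
    + (ε : EReal) * KLfin (fun p : W × Y => π p.1 p.2) (fun p : W × Y => μ p.1 * ν p.2)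
    + divergence φ₁ (fun x => ∑ y, π x y) μ
    + divergence φ₂ (fun y => (∑ x, π x y) + νm y) ν

/-- Dual objective of the unbalanced (cell) problem with `Y`-submarginal `νm`. -/
def DJfun {W Y : Type*} [Fintype W] [Fintype Y]
    (c : W → Y → ℝ) (ε : ℝ) (φ₁ φ₂ : ℝ → EReal)
    (μ : W → ℝ) (ν : Y → ℝ) (νm : Y → ℝ) (α : W → ℝ) (β : Y → ℝ) : EReal :=
  ((ε * ∑ x, ∑ y, (1 - Real.exp ((α x + β y - c x y) / ε)) * (μ x * ν y) : ℝ) : EReal)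
    - (∑ x, (μ x : EReal) * conjFn φ₁ (-(α x)))
    - (∑ y, (ν y : EReal) * conjFn φ₂ (-(β y)))
    - ((∑ y, β y * νm y : ℝ) : EReal)

/-- The `Y`-submarginal `ν_{-J}` of the plan `π` outside the cell `J`:
`ν_{-J}(y) = ∑_{x ∉ J} π(x,y)`. -/
def outMarg {X Y : Type*} [Fintype X] (J : Set X) (π : X → Y → ℝ) : Y → ℝ :=
  fun y => ∑ x, (Jᶜ).indicator (fun x' => π x' y) x

/-- The global unbalanced objective
`E(π) = ⟨c, π⟩ + ε KL(π|μ⊗ν) + D_{φ₁}(P_X π|μ) + D_{φ₂}(P_Y π|ν)`. -/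
def Eglobal {X Y : Type*} [Fintype X] [Fintype Y]
    (c : X → Y → ℝ) (ε : ℝ) (φ₁ φ₂ : ℝ → EReal)
    (μ : X → ℝ) (ν : Y → ℝ) (π : X → Y → ℝ) : EReal :=
  EJfun c ε φ₁ φ₂ μ ν (fun _ => 0) π

lemma aux_conj_ge (φ : ℝ → EReal) (h : AssumptionA φ) (z x : ℝ) (hx : 0 ≤ x) :
    ((z * x - (φ x).toReal : ℝ) : EReal) ≤ conjFn φ z := by
  have hb : φ x ≠ ⊥ := h.1.2.2.1 x
  have ht : φ x ≠ ⊤ := h.2.2.1 x hx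
  have : ((z * x - (φ x).toReal : ℝ) : EReal) = ((z * x : ℝ) : EReal) - φ x := by
    rw [EReal.coe_sub, EReal.coe_toReal ht hb]
  rw [this]
  exact le_iSup (fun x : ℝ => (((z * x : ℝ) : EReal) - φ x)) x

lemma aux_conj_zero (φ : ℝ → EReal) (h : AssumptionA φ) : conjFn φ (-0) ≤ 0 := by
  refine iSup_le fun x => ?_
  have := h.2.1 x
  simpa using this

lemma aux_toReal_nonneg (φ : ℝ → EReal) (h : AssumptionA φ) (x : ℝ) : 0 ≤ (φ x).toReal :=
  EReal.toReal_nonneg (h.2.1 x)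

lemma aux_coe_sum {Z : Type*} [Fintype Z] (f : Z → ℝ) :
    ((∑ z, f z : ℝ) : EReal) = ∑ z, (f z : EReal) :=
  map_sum (⟨⟨Real.toEReal, EReal.coe_zero⟩, EReal.coe_add⟩ : ℝ →+ EReal) f Finset.univ

lemma aux_sum_ge {Z : Type*} [Fintype Z] (w a : Z → ℝ) (hw : ∀ z, 0 < w z) (g : Z → EReal)
    (h : ∀ z, (a z : EReal) ≤ g z) :
    ((∑ z, w z * a z : ℝ) : EReal) ≤ ∑ z, (w z : EReal) * g z := by
  rw [aux_coe_sum]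
  refine Finset.sum_le_sum fun z _ => ?_
  rw [EReal.coe_mul]
  exact mul_le_mul_of_nonneg_left (h z) (by exact_mod_cast (hw z).le)

lemma aux_sum_le {Z : Type*} [Fintype Z] (w : Z → ℝ) (hw : ∀ z, 0 < w z) (g : EReal)
    (h : g ≤ 0) : ∑ z, (w z : EReal) * g ≤ 0 := by
  refine Finset.sum_nonpos fun z _ => ?_
  have := mul_le_mul_of_nonneg_left h (show (0 : EReal) ≤ (w z : EReal) by
    exact_mod_cast (hw z).le)
  simpa using this

lemma aux_real {X Y : Type*} [Fintype X] [Fintype Y] 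
    (μ : X → ℝ) (ν : Y → ℝ) (hμ : ∀ x, 0 < μ x) (hν : ∀ y, 0 < ν y)
    (c : X → Y → ℝ) (ε : ℝ) (hε : 0 < ε) (M d p q : ℝ) (νm : Y → ℝ)
    (h0 : ∀ y, 0 ≤ νm y) (hm : ∀ y, νm y ≤ M * ν y) (α : X → ℝ) (β : Y → ℝ)
    (a : X → ℝ) (b : Y → ℝ) (ha : ∀ x, -p ≤ a x) (ha' : ∀ x, -α x - p ≤ a x)
    (hb : ∀ y, -q ≤ b y) (hb' : ∀ y, -(β y) * (M + 1) - q ≤ b y)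
    (H : d ≤ ε * ∑ x, ∑ y, (1 - Real.exp ((α x + β y - c x y) / ε)) * (μ x * ν y)
      - (∑ x, μ x * a x) - (∑ y, ν y * b y) - ∑ y, β y * νm y)
    (S : ℝ) (hS : S = |ε * (∑ x, ∑ y, μ x * ν y) + p * (∑ x, μ x) + q * (∑ y, ν y) - d|) :
    (∀ x, -α x ≤ S / μ x) ∧ (∀ y, -β y ≤ S / ν y) ∧
      ∀ x y, α x + β y ≤ c x y + S / (μ x * ν y) := by
  have n1 : ∀ x, 0 ≤ μ x * (a x + p) := fun x =>
    mul_nonneg (hμ x).le (by linarith [ha x])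
  have e2 : ∀ y, 0 ≤ ν y * (b y + q) + β y * νm y ∧
      ν y * (-β y) ≤ ν y * (b y + q) + β y * νm y := by
    intro y
    have hy := hν y
    rcases le_total 0 (β y) with hβ | hβ
    · have u1 : 0 ≤ ν y * (b y + q) := mul_nonneg hy.le (by linarith [hb y])
      have u2 := mul_nonneg hβ (h0 y)
      have u3 := mul_nonneg hy.le hβ
      constructor <;> nlinarith
    · have u1 : ν y * (-(β y) * (M + 1)) ≤ ν y * (b y + q) :=
        mul_le_mul_of_nonneg_left (by linarith [hb' y]) hy.le
      have u2 := mul_le_mul_of_nonpos_left (hm y) hβ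
      have u3 := mul_nonneg hy.le (neg_nonneg.2 hβ)
      constructor <;> nlinarith
  have n3 : ∀ x y, 0 ≤ ε * (Real.exp ((α x + β y - c x y) / ε) * (μ x * ν y)) := fun x y =>
    mul_nonneg hε.le (mul_nonneg (Real.exp_pos _).le (mul_pos (hμ x) (hν y)).le)
  have n3s : ∀ x, 0 ≤ ∑ y, ε * (Real.exp ((α x + β y - c x y) / ε) * (μ x * ν y)) := fun x =>
    Finset.sum_nonneg fun y _ => n3 x y
  have key : (∑ x, μ x * (a x + p)) + (∑ y, (ν y * (b y + q) + β y * νm y))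
      + ∑ x, ∑ y, ε * (Real.exp ((α x + β y - c x y) / ε) * (μ x * ν y)) ≤ S := by
    rw [hS]
    refine le_trans ?_ (le_abs_self _)
    simp only [mul_add, sub_mul, one_mul, Finset.sum_add_distrib, Finset.sum_sub_distrib,
      ← Finset.mul_sum, ← Finset.sum_mul, mul_sub] at H ⊢
    linarith
  have s1 := Finset.sum_nonneg fun x (_ : x ∈ Finset.univ) => n1 x
  have s2 := Finset.sum_nonneg fun y (_ : y ∈ Finset.univ) => (e2 y).1
  have s3 := Finset.sum_nonneg fun x (_ : x ∈ Finset.univ) => n3s x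
  refine ⟨fun x => ?_, fun y => ?_, fun x y => ?_⟩
  · have := Finset.single_le_sum (fun x _ => n1 x) (Finset.mem_univ x)
    rw [le_div_iff₀ (hμ x)]
    have h2 : μ x * (-α x) ≤ μ x * (a x + p) :=
      mul_le_mul_of_nonneg_left (by linarith [ha' x]) (hμ x).le
    linarith
  · have := Finset.single_le_sum (fun y _ => (e2 y).1) (Finset.mem_univ y)
    rw [le_div_iff₀ (hν y)]
    linarith [(e2 y).2]
  · have t1 := Finset.single_le_sum (fun x _ => n3s x) (Finset.mem_univ x)
    have t2 := Finset.single_le_sum (fun y _ => n3 x y) (Finset.mem_univ y)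
    have hp := mul_pos (hμ x) (hν y)
    have t3 : (α x + β y - c x y) / ε ≤ Real.exp ((α x + β y - c x y) / ε) := by
      linarith [Real.add_one_le_exp ((α x + β y - c x y) / ε)]
    have t4 : ε * ((α x + β y - c x y) / ε * (μ x * ν y)) ≤
        ε * (Real.exp ((α x + β y - c x y) / ε) * (μ x * ν y)) := by gcongr
    have t5 : ε * ((α x + β y - c x y) / ε * (μ x * ν y))
        = (α x + β y - c x y) * (μ x * ν y) := by field_simp
    have : α x + β y - c x y ≤ S / (μ x * ν y) := by
      rw [le_div_iff₀ hp]; linarith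
    linarith

/-- uniform bound on the dual maximizers, depending only on
`μ, ν, c, ε, φ₁, φ₂, M` but not on the `Y`-submarginal `ν_{-J}` with
`0 ≤ ν_{-J} ≤ M·ν`. -/
theorem dual_maximizers_uniformly_bounded
    {X Y : Type*} [Fintype X] [Fintype Y] [Nonempty X] [Nonempty Y]
    (μ : X → ℝ) (ν : Y → ℝ) (hμ : ∀ x, 0 < μ x) (hν : ∀ y, 0 < ν y)
    (c : X → Y → ℝ) (ε : ℝ) (hε : 0 < ε)
    (φ₁ φ₂ : ℝ → EReal) (h₁ : AssumptionA φ₁) (h₂ : AssumptionA φ₂)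
    (M : ℝ) (hM : 0 ≤ M) :
    ∃ C : ℝ, ∀ νm : Y → ℝ, (∀ y, 0 ≤ νm y) → (∀ y, νm y ≤ M * ν y) →
      ∀ (α : X → ℝ) (β : Y → ℝ),
        (∀ (α' : X → ℝ) (β' : Y → ℝ),
            DJfun c ε φ₁ φ₂ μ ν νm α' β' ≤ DJfun c ε φ₁ φ₂ μ ν νm α β) →
        (∀ x, |α x| ≤ C) ∧ (∀ y, |β y| ≤ C) := by
  obtain ⟨d, hd⟩ : ∃ d : ℝ, d = ε * ∑ x, ∑ y,
    (1 - Real.exp (((0 : ℝ) + 0 - c x y) / ε)) * (μ x * ν y) := ⟨_, rfl⟩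
  obtain ⟨p, hp⟩ : ∃ p : ℝ, p = (φ₁ 0).toReal + (φ₁ 1).toReal := ⟨_, rfl⟩
  obtain ⟨q, hq⟩ : ∃ q : ℝ, q = (φ₂ 0).toReal + (φ₂ (M + 1)).toReal := ⟨_, rfl⟩
  obtain ⟨S, hS⟩ : ∃ S : ℝ, S = |ε * (∑ x, ∑ y, μ x * ν y) + p * (∑ x, μ x)
    + q * (∑ y, ν y) - d| := ⟨_, rfl⟩
  have S0 : 0 ≤ S := hS ▸ abs_nonneg _
  refine ⟨(∑ x, S / μ x) + (∑ y, S / ν y) + ∑ x, ∑ y, (|c x y| + S / (μ x * ν y)), ?_⟩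
  intro νm h0 hm α β hmax
  have lo : (d : EReal) ≤ DJfun c ε φ₁ φ₂ μ ν νm α β := by
    refine le_trans ?_ (hmax (fun _ => 0) (fun _ => 0))
    unfold DJfun
    have k1 := aux_sum_le μ hμ _ (aux_conj_zero φ₁ h₁)
    have k2 := aux_sum_le ν hν _ (aux_conj_zero φ₂ h₂)
    rw [← hd]
    have := EReal.sub_le_sub (EReal.sub_le_sub (le_refl (d : EReal)) k1) k2
    simpa using this
  have P0 := aux_toReal_nonneg φ₁ h₁ 0
  have P1 := aux_toReal_nonneg φ₁ h₁ 1
  have Q0 := aux_toReal_nonneg φ₂ h₂ 0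
  have Q1 := aux_toReal_nonneg φ₂ h₂ (M + 1)
  let a : X → ℝ := fun x => max (-(α x) * 0 - (φ₁ 0).toReal) (-(α x) * 1 - (φ₁ 1).toReal)
  let b : Y → ℝ := fun y =>
    max (-(β y) * 0 - (φ₂ 0).toReal) (-(β y) * (M + 1) - (φ₂ (M + 1)).toReal)
  have ga : ∀ x, (a x : EReal) ≤ conjFn φ₁ (-(α x)) := by
    intro x
    rcases max_choice (-(α x) * 0 - (φ₁ 0).toReal) (-(α x) * 1 - (φ₁ 1).toReal) with h | h
    · simp only [a, h]; exact aux_conj_ge φ₁ h₁ _ _ le_rfl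
    · simp only [a, h]; exact aux_conj_ge φ₁ h₁ _ _ zero_le_one
  have gb : ∀ y, (b y : EReal) ≤ conjFn φ₂ (-(β y)) := by
    intro y
    rcases max_choice (-(β y) * 0 - (φ₂ 0).toReal)
      (-(β y) * (M + 1) - (φ₂ (M + 1)).toReal) with h | h
    · simp only [b, h]; exact aux_conj_ge φ₂ h₂ _ _ le_rfl
    · simp only [b, h]; exact aux_conj_ge φ₂ h₂ _ _ (by linarith)
  have H : d ≤ ε * ∑ x, ∑ y, (1 - Real.exp ((α x + β y - c x y) / ε)) * (μ x * ν y)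
      - (∑ x, μ x * a x) - (∑ y, ν y * b y) - ∑ y, β y * νm y := by
    rw [← EReal.coe_le_coe_iff]
    refine lo.trans ?_
    unfold DJfun
    rw [EReal.coe_sub, EReal.coe_sub, EReal.coe_sub]
    exact EReal.sub_le_sub (EReal.sub_le_sub (EReal.sub_le_sub le_rfl
      (aux_sum_ge μ a hμ _ ga)) (aux_sum_ge ν b hν _ gb)) le_rfl
  obtain ⟨r1, r2, r3⟩ := aux_real μ ν hμ hν c ε hε M d p q νm h0 hm α β a b
    (fun x => le_max_of_le_left (by linarith)) (fun x => le_max_of_le_right (by linarith))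
    (fun y => le_max_of_le_left (by linarith)) (fun y => le_max_of_le_right (by linarith))
    H S hS
  have n1 : ∀ x, 0 ≤ S / μ x := fun x => div_nonneg S0 (hμ x).le
  have n2 : ∀ y, 0 ≤ S / ν y := fun y => div_nonneg S0 (hν y).le
  have n3 : ∀ x y, 0 ≤ |c x y| + S / (μ x * ν y) := fun x y =>
    add_nonneg (abs_nonneg _) (div_nonneg S0 (mul_pos (hμ x) (hν y)).le)
  have n3s : ∀ x, 0 ≤ ∑ y, (|c x y| + S / (μ x * ν y)) := fun x =>
    Finset.sum_nonneg fun y _ => n3 x y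
  have b1 := fun x => Finset.single_le_sum (fun x _ => n1 x) (Finset.mem_univ x)
  have b2 := fun y => Finset.single_le_sum (fun y _ => n2 y) (Finset.mem_univ y)
  have b3 : ∀ x y, |c x y| + S / (μ x * ν y) ≤
      ∑ x, ∑ y, (|c x y| + S / (μ x * ν y)) := fun x y =>
    (Finset.single_le_sum (fun y _ => n3 x y) (Finset.mem_univ y)).trans
      (Finset.single_le_sum (fun x _ => n3s x) (Finset.mem_univ x))
  obtain ⟨x0⟩ := ‹Nonempty X›
  obtain ⟨y0⟩ := ‹Nonempty Y›
  refine ⟨fun x => abs_le.2 ⟨?_, ?_⟩, fun y => abs_le.2 ⟨?_, ?_⟩⟩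
  · linarith [r1 x, b1 x, n2 y0, b2 y0, n3 x y0, b3 x y0]
  · linarith [r3 x y0, r2 y0, n1 x, b1 x, n2 y0, b2 y0, n3 x y0, b3 x y0, le_abs_self (c x y0)]
  · linarith [r2 y, n1 x0, b1 x0, b2 y, n3 x0 y, b3 x0 y]
  · linarith [r3 x0 y, r1 x0, n2 y, b1 x0, b2 y, n3 x0 y, b3 x0 y, le_abs_self (c x0 y)]

end
end

section
/- Let X and Y be nonempty finite sets, μ: X → ℝ and ν: Y → ℝ strictly positive weight functions, c: X × Y → ℝ a cost, ε > 0, and φ₁, φ₂ entropy functions satisfying Assumption A. Let 𝒥 be a partition of X into nonempty subsets, and let π: X × Y → ℝ≥0 be a nonnegative plan such that for every cell X_J ∈ 𝒥, the restriction π|_{X_J × Y} is the minimizer of the cell subproblem E_J(·| ν_{-J}) with ν_{-J}(y) := Σ_{x ∉ X_J} π(x,y). Then π is the unique global minimizer over nonnegative plans of E(π) := Σ_{x,y} c(x,y)π(x,y) + ε·KL(π | μ ⊗ ν) + D_{φ₁}(P_X π | μ) + D_{φ₂}(P_Y π | ν). -/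
open Filter Topology
open scoped Classical

noncomputable section

/-! ### Helper lemmas -/

def klt (m s : ℝ) : ℝ := s * Real.log (s / m) - s + m

def EJr {W Y : Type*} [Fintype W] [Fintype Y]
    (c : W → Y → ℝ) (ε : ℝ) (f₁ f₂ : ℝ → ℝ)
    (μ : W → ℝ) (ν : Y → ℝ) (νm : Y → ℝ) (π : W → Y → ℝ) : ℝ :=
  (∑ x, ∑ y, (c x y * π x y + ε * klt (μ x * ν y) (π x y)))
    + (∑ x, μ x * f₁ ((∑ y, π x y) / μ x))
    + ∑ y, ν y * f₂ (((∑ x, π x y) + νm y) / ν y)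

lemma coe_sum_ereal {Z : Type*} (s : Finset Z) (f : Z → ℝ) :
    ((∑ z ∈ s, f z : ℝ) : EReal) = ∑ z ∈ s, (f z : EReal) := by
  induction s using Finset.induction_on with
  | empty => simp
  | insert a s ha ih => rw [Finset.sum_insert ha, Finset.sum_insert ha, EReal.coe_add, ih]

lemma phi_coe {φ : ℝ → EReal} (h : AssumptionA φ) {x : ℝ} (hx : 0 ≤ x) :
    φ x = (((φ x).toReal : ℝ) : EReal) :=
  (EReal.coe_toReal (h.2.2.1 x hx) (h.1.2.2.1 x)).symm

lemma phi_convex {φ : ℝ → EReal} (h : AssumptionA φ) :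
    ConvexOn ℝ (Set.Ici 0) (fun s => (φ s).toReal) := by
  refine ⟨convex_Ici 0, ?_⟩
  intro x hx y hy a b ha hb hab
  have hx' : (0:ℝ) ≤ x := hx
  have hy' : (0:ℝ) ≤ y := hy
  have hc := h.1.2.1 x y a b ha hb hab
  rw [phi_coe h hx', phi_coe h hy', phi_coe h (by positivity : 0 ≤ a * x + b * y)] at hc
  exact_mod_cast hc

lemma phi_deriv {φ : ℝ → EReal} (h : AssumptionA φ) {t : ℝ} (ht : 0 < t) :
    HasDerivAt (fun s => (φ s).toReal) (deriv (fun s => (φ s).toReal) t) t := by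
  have := (h.2.2.2.differentiableOn (by norm_num)).differentiableAt (Ioi_mem_nhds ht)
  exact this.hasDerivAt

lemma divergence_coe {Z : Type*} [Fintype Z] {φ : ℝ → EReal} (h : AssumptionA φ)
    (ρ σ : Z → ℝ) (hρ : ∀ z, 0 ≤ ρ z) (hσ : ∀ z, 0 < σ z) :
    divergence φ ρ σ = ((∑ z, σ z * (φ (ρ z / σ z)).toReal : ℝ) : EReal) := by
  unfold divergence
  have h0 : (∑ z, if σ z = 0 then ρ z else 0 : ℝ) = 0 :=
    Finset.sum_eq_zero fun z _ => by simp [(hσ z).ne']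
  rw [h0, EReal.coe_zero, mul_zero, add_zero, coe_sum_ereal]
  refine Finset.sum_congr rfl fun z _ => ?_
  rw [if_pos (hσ z), EReal.coe_mul, ← phi_coe h (div_nonneg (hρ z) (hσ z).le)]

lemma EJfun_coe {W Y : Type*} [Fintype W] [Fintype Y]
    (c : W → Y → ℝ) (ε : ℝ) {φ₁ φ₂ : ℝ → EReal} (h₁ : AssumptionA φ₁) (h₂ : AssumptionA φ₂)
    (μ : W → ℝ) (ν : Y → ℝ) (hμ : ∀ x, 0 < μ x) (hν : ∀ y, 0 < ν y)
    (νm : Y → ℝ) (hm : ∀ y, 0 ≤ νm y) (π : W → Y → ℝ) (hπ : ∀ x y, 0 ≤ π x y) :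
    EJfun c ε φ₁ φ₂ μ ν νm π
      = ((EJr c ε (fun s => (φ₁ s).toReal) (fun s => (φ₂ s).toReal) μ ν νm π : ℝ) : EReal) := by
  unfold EJfun EJr
  rw [divergence_coe h₁ _ _ (fun x => Finset.sum_nonneg fun y _ => hπ x y) hμ,
    divergence_coe h₂ _ _ (fun y => add_nonneg (Finset.sum_nonneg fun x _ => hπ x y) (hm y)) hν]
  unfold KLfin
  rw [if_pos (fun p hp => absurd hp (mul_pos (hμ p.1) (hν p.2)).ne')]
  rw [← EReal.coe_mul, ← EReal.coe_add, ← EReal.coe_add, ← EReal.coe_add]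
  congr 3
  rw [Fintype.sum_prod_type, Finset.mul_sum, ← Finset.sum_add_distrib]
  refine Finset.sum_congr rfl fun x _ => ?_
  rw [Finset.mul_sum, ← Finset.sum_add_distrib]
  rfl

lemma sum_diff_one {Z : Type*} [Fintype Z] (f g : Z → ℝ) (z₀ : Z)
    (h : ∀ z, z ≠ z₀ → f z = g z) : ∑ z, f z = ∑ z, g z + (f z₀ - g z₀) := by
  have : ∑ z, (f z - g z) = f z₀ - g z₀ :=
    Finset.sum_eq_single z₀ (fun z _ hz => by rw [h z hz, sub_self]) (by simp)
  rw [Finset.sum_sub_distrib] at this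
  linarith

def pert {W Y : Type*} (π : W → Y → ℝ) (x₀ : W) (y₀ : Y) (s : ℝ) : W → Y → ℝ :=
  fun x y => if x = x₀ ∧ y = y₀ then s else π x y

/-- One-coordinate objective. -/
def Gfun (c ε m : ℝ) (f₁ f₂ : ℝ → ℝ) (μ ν a b s₀ s : ℝ) : ℝ :=
  c * s + ε * klt m s + μ * f₁ ((a + (s - s₀)) / μ) + ν * f₂ ((b + (s - s₀)) / ν)

lemma EJr_pert {W Y : Type*} [Fintype W] [Fintype Y]
    (c : W → Y → ℝ) (ε : ℝ) (f₁ f₂ : ℝ → ℝ)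
    (μ : W → ℝ) (ν : Y → ℝ) (νm : Y → ℝ) (π : W → Y → ℝ) (x₀ : W) (y₀ : Y) (s : ℝ) :
    EJr c ε f₁ f₂ μ ν νm (pert π x₀ y₀ s) = EJr c ε f₁ f₂ μ ν νm π
      + (Gfun (c x₀ y₀) ε (μ x₀ * ν y₀) f₁ f₂ (μ x₀) (ν y₀) (∑ y, π x₀ y)
          ((∑ x, π x y₀) + νm y₀) (π x₀ y₀) s
        - Gfun (c x₀ y₀) ε (μ x₀ * ν y₀) f₁ f₂ (μ x₀) (ν y₀) (∑ y, π x₀ y)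
          ((∑ x, π x y₀) + νm y₀) (π x₀ y₀) (π x₀ y₀)) := by
  have hx : ∀ x, x ≠ x₀ → ∀ y, pert π x₀ y₀ s x y = π x y := by
    intro x hx y; simp [pert, hx]
  have hy : ∀ y, y ≠ y₀ → ∀ x, pert π x₀ y₀ s x y = π x y := by
    intro y hy x; simp [pert, hy]
  have h0 : pert π x₀ y₀ s x₀ y₀ = s := by simp [pert]
  unfold EJr
  rw [sum_diff_one (fun x => ∑ y, (c x y * pert π x₀ y₀ s x y
        + ε * klt (μ x * ν y) (pert π x₀ y₀ s x y)))
      (fun x => ∑ y, (c x y * π x y + ε * klt (μ x * ν y) (π x y))) x₀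
      (fun x h => by simp only [hx x h])]
  rw [sum_diff_one (fun y => c x₀ y * pert π x₀ y₀ s x₀ y
        + ε * klt (μ x₀ * ν y) (pert π x₀ y₀ s x₀ y))
      (fun y => c x₀ y * π x₀ y + ε * klt (μ x₀ * ν y) (π x₀ y)) y₀
      (fun y h => by simp only [hy y h])]
  rw [sum_diff_one (fun x => μ x * f₁ ((∑ y, pert π x₀ y₀ s x y) / μ x))
      (fun x => μ x * f₁ ((∑ y, π x y) / μ x)) x₀
      (fun x h => by simp only [hx x h])]
  rw [sum_diff_one (fun y => ν y * f₂ (((∑ x, pert π x₀ y₀ s x y) + νm y) / ν y))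
      (fun y => ν y * f₂ (((∑ x, π x y) + νm y) / ν y)) y₀
      (fun y h => by simp only [hy y h])]
  rw [sum_diff_one (fun y => pert π x₀ y₀ s x₀ y) (fun y => π x₀ y) y₀ (fun y h => hy y h x₀)]
  rw [sum_diff_one (fun x => pert π x₀ y₀ s x y₀) (fun x => π x y₀) x₀ (fun x h => hx x h y₀)]
  simp only [h0, Gfun, sub_self, add_zero]
  rw [add_right_comm (∑ x, π x y₀)]
  ring

lemma conv_bound {f : ℝ → ℝ} (hf : ConvexOn ℝ (Set.Ici 0) f) {m a s : ℝ} (hm : 0 < m)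
    (ha : 0 ≤ a) (hs : 0 ≤ s) (hs1 : s ≤ 1) :
    m * f ((a + s) / m) ≤ m * f (a / m) + s * (m * f ((a + 1) / m) - m * f (a / m)) := by
  have := hf.2 (x := a / m) (y := (a + 1) / m) (Set.mem_Ici.2 (by positivity))
    (Set.mem_Ici.2 (by positivity)) (sub_nonneg.2 hs1) hs (by ring)
  simp only [smul_eq_mul] at this
  have e : (1 - s) * (a / m) + s * ((a + 1) / m) = (a + s) / m := by field_simp; ring
  rw [e] at this
  have := mul_le_mul_of_nonneg_left this hm.le
  linarith

lemma G_pos {c ε m : ℝ} {f₁ f₂ : ℝ → ℝ} {μ ν a b s₀ : ℝ} (hε : 0 < ε) (hm : 0 < m)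
    (hμ : 0 < μ) (hν : 0 < ν) (hf₁ : ConvexOn ℝ (Set.Ici 0) f₁)
    (hf₂ : ConvexOn ℝ (Set.Ici 0) f₂) (ha : 0 ≤ a) (hb : 0 ≤ b) (hs₀ : 0 ≤ s₀)
    (h : ∀ s, 0 ≤ s → Gfun c ε m f₁ f₂ μ ν a b s₀ s₀ ≤ Gfun c ε m f₁ f₂ μ ν a b s₀ s) :
    0 < s₀ := by
  rcases hs₀.lt_or_eq with h0 | h0
  · exact h0
  exfalso
  subst h0
  set K₁ := μ * f₁ ((a + 1) / μ) - μ * f₁ (a / μ) with hK₁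
  set K₂ := ν * f₂ ((b + 1) / ν) - ν * f₂ (b / ν) with hK₂
  set L := -((c + K₁ + K₂) / ε) with hL
  set s := min 1 (m * Real.exp L) with hs
  have hspos : 0 < s := by rw [hs]; positivity
  have hs1 : s ≤ 1 := min_le_left _ _
  have hlog : Real.log (s / m) ≤ L := by
    rw [Real.log_le_iff_le_exp (by positivity), div_le_iff₀ hm, mul_comm]
    exact min_le_right _ _
  have hh := h s hspos.le
  simp only [Gfun, klt, sub_zero, add_zero, mul_zero, zero_mul, zero_add] at hh
  have b1 := conv_bound hf₁ hμ ha hspos.le hs1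
  have b2 := conv_bound hf₂ hν hb hspos.le hs1
  rw [← hK₁] at b1
  rw [← hK₂] at b2
  have e : s * (c + ε * Real.log (s / m) - ε + K₁ + K₂) < 0 := by
    apply mul_neg_of_pos_of_neg hspos
    have : ε * Real.log (s / m) ≤ ε * L := mul_le_mul_of_nonneg_left hlog hε.le
    have e2 : ε * L = -(c + K₁ + K₂) := by rw [hL]; field_simp
    linarith
  linarith

lemma klt_deriv {m s : ℝ} (hm : 0 < m) (hs : 0 < s) :
    HasDerivAt (klt m) (Real.log (s / m)) s := by
  have h1 : HasDerivAt (fun s : ℝ => Real.log (s / m)) ((1 / m) / (s / m)) s :=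
    ((hasDerivAt_id s).div_const m).log (by simp; exact ⟨hs.ne', hm.ne'⟩)
  have h2 := (((hasDerivAt_id s).mul h1).sub (hasDerivAt_id s)).add_const m
  refine h2.congr_deriv ?_
  simp only [id]
  field_simp
  ring

lemma G_deriv {c ε m : ℝ} {f₁ f₂ : ℝ → ℝ} {μ ν a b s₀ d₁ d₂ : ℝ} (hm : 0 < m)
    (hμ : 0 < μ) (hν : 0 < ν) (hs₀ : 0 < s₀)
    (hf₁ : HasDerivAt f₁ d₁ (a / μ)) (hf₂ : HasDerivAt f₂ d₂ (b / ν))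
    (h : ∀ s, 0 ≤ s → Gfun c ε m f₁ f₂ μ ν a b s₀ s₀ ≤ Gfun c ε m f₁ f₂ μ ν a b s₀ s) :
    c + ε * Real.log (s₀ / m) + d₁ + d₂ = 0 := by
  have key : ∀ {f : ℝ → ℝ} {d a μ : ℝ}, 0 < μ → HasDerivAt f d (a / μ) →
      HasDerivAt (fun s => μ * f ((a + (s - s₀)) / μ)) d s₀ := by
    intro f d a μ hμ hf
    have hin : HasDerivAt (fun s : ℝ => (a + (s - s₀)) / μ) (1 / μ) s₀ :=
      (((hasDerivAt_id s₀).sub_const s₀).const_add a).div_const μ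
    have hf' : HasDerivAt f d ((a + (s₀ - s₀)) / μ) := by simpa using hf
    have := (HasDerivAt.comp s₀ hf' hin).const_mul μ
    refine this.congr_deriv ?_
    field_simp
  have hd : HasDerivAt (Gfun c ε m f₁ f₂ μ ν a b s₀)
      (c * 1 + ε * Real.log (s₀ / m) + d₁ + d₂) s₀ :=
    ((((hasDerivAt_id s₀).const_mul c).add ((klt_deriv hm hs₀).const_mul ε)).add
      (key hμ hf₁)).add (key hν hf₂)
  have hmin : IsLocalMin (Gfun c ε m f₁ f₂ μ ν a b s₀) s₀ := by
    filter_upwards [Ioi_mem_nhds hs₀] with s hs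
    exact h s (le_of_lt hs)
  have := hmin.hasDerivAt_eq_zero hd
  linarith

lemma tangent {f : ℝ → ℝ} (hf : ConvexOn ℝ (Set.Ici 0) f) {d t s : ℝ} (ht : 0 ≤ t) (hs : 0 ≤ s)
    (hd : HasDerivAt f d t) : f t + d * (s - t) ≤ f s := by
  rcases lt_trichotomy s t with h | h | h
  · have := hf.slope_le_of_hasDerivAt hs ht h hd
    rw [slope_def_field, div_le_iff₀ (by linarith)] at this
    linarith
  · subst h; simp
  · have := hf.le_slope_of_hasDerivAt ht hs h hd
    rw [slope_def_field, le_div_iff₀ (by linarith)] at this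
    linarith

lemma tangent_scaled {f : ℝ → ℝ} (hf : ConvexOn ℝ (Set.Ici 0) f) {d m t s : ℝ} (hm : 0 < m)
    (ht : 0 ≤ t) (hs : 0 ≤ s) (hd : HasDerivAt f d (t / m)) :
    m * f (t / m) + d * (s - t) ≤ m * f (s / m) := by
  have := mul_le_mul_of_nonneg_left
    (tangent hf (div_nonneg ht hm.le) (div_nonneg hs hm.le) hd) hm.le
  have e : m * (f (t / m) + d * (s / m - t / m)) = m * f (t / m) + d * (s - t) := by
    field_simp
  linarith

lemma klt_bregman {m t s : ℝ} (hm : 0 < m) (ht : 0 < t) (hs : 0 ≤ s) :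
    klt m s = klt m t + Real.log (t / m) * (s - t) + klt t s := by
  unfold klt
  rcases hs.eq_or_lt with h | h
  · subst h; simp; ring
  · rw [Real.log_div h.ne' hm.ne', Real.log_div h.ne' ht.ne', Real.log_div ht.ne' hm.ne']
    ring

lemma klt_pos {t s : ℝ} (ht : 0 < t) (hs : 0 ≤ s) (hne : s ≠ t) : 0 < klt t s := by
  unfold klt
  rcases hs.eq_or_lt with h | h
  · subst h; simpa using ht
  · have h1 : Real.log (t / s) < t / s - 1 := Real.log_lt_sub_one_of_pos (by positivity)
      (by rw [Ne, div_eq_one_iff_eq h.ne']; exact hne.symm)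
    have h2 : Real.log (s / t) = - Real.log (t / s) := by rw [← Real.log_inv, inv_div]
    have h3 := mul_lt_mul_of_pos_left h1 h
    have h4 : s * (t / s - 1) = t - s := by field_simp
    rw [h2]
    linarith

lemma klt_nonneg {t s : ℝ} (ht : 0 < t) (hs : 0 ≤ s) : 0 ≤ klt t s := by
  by_cases h : s = t
  · subst h; simp [klt, div_self ht.ne']
  · exact (klt_pos ht hs h).le

lemma sum_cell {X : Type*} [Fintype X] (J : Set X) [Fintype J] (f : X → ℝ) :
    (∑ j : J, f j) + ∑ x, (Jᶜ).indicator f x = ∑ x, f x := by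
  have : ∑ j : J, f j = ∑ x, J.indicator f x := by
    rw [Finset.sum_set_coe (f := f), ← Finset.sum_indicator_subset f (Finset.subset_univ _)]
    simp
  rw [this, ← Finset.sum_add_distrib]
  refine Finset.sum_congr rfl fun x _ => ?_
  exact Set.indicator_self_add_compl_apply J f x

/-- The quantitative global inequality from stationarity. -/
lemma global_ineq {X Y : Type*} [Fintype X] [Fintype Y]
    (μ : X → ℝ) (ν : Y → ℝ) (hμ : ∀ x, 0 < μ x) (hν : ∀ y, 0 < ν y)
    (c : X → Y → ℝ) (ε : ℝ) (f₁ f₂ : ℝ → ℝ)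
    (hf₁ : ConvexOn ℝ (Set.Ici 0) f₁) (hf₂ : ConvexOn ℝ (Set.Ici 0) f₂)
    (π π' : X → Y → ℝ) (hπ : ∀ x y, 0 < π x y) (hπ' : ∀ x y, 0 ≤ π' x y)
    (d₁ : X → ℝ) (d₂ : Y → ℝ)
    (hd₁ : ∀ x, HasDerivAt f₁ (d₁ x) ((∑ y, π x y) / μ x))
    (hd₂ : ∀ y, HasDerivAt f₂ (d₂ y) ((∑ x, π x y) / ν y))
    (hst : ∀ x y, c x y + ε * Real.log (π x y / (μ x * ν y)) + d₁ x + d₂ y = 0) :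
    EJr c ε f₁ f₂ μ ν (fun _ => 0) π + ∑ x, ∑ y, ε * klt (π x y) (π' x y)
      ≤ EJr c ε f₁ f₂ μ ν (fun _ => 0) π' := by
  unfold EJr
  simp only [add_zero]
  have A : ∑ x, (μ x * f₁ ((∑ y, π x y) / μ x) + d₁ x * (∑ y, π' x y - ∑ y, π x y))
      ≤ ∑ x, μ x * f₁ ((∑ y, π' x y) / μ x) :=
    Finset.sum_le_sum fun x _ => tangent_scaled hf₁ (hμ x)
      (Finset.sum_nonneg fun y _ => (hπ x y).le) (Finset.sum_nonneg fun y _ => hπ' x y) (hd₁ x)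
  have B : ∑ y, (ν y * f₂ ((∑ x, π x y) / ν y) + d₂ y * (∑ x, π' x y - ∑ x, π x y))
      ≤ ∑ y, ν y * f₂ ((∑ x, π' x y) / ν y) :=
    Finset.sum_le_sum fun y _ => tangent_scaled hf₂ (hν y)
      (Finset.sum_nonneg fun x _ => (hπ x y).le) (Finset.sum_nonneg fun x _ => hπ' x y) (hd₂ y)
  rw [Finset.sum_add_distrib] at A B
  have A' : ∑ x, d₁ x * (∑ y, π' x y - ∑ y, π x y) = ∑ x, ∑ y, d₁ x * (π' x y - π x y) :=
    Finset.sum_congr rfl fun x _ => by rw [← Finset.sum_sub_distrib, Finset.mul_sum]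
  have B' : ∑ y, d₂ y * (∑ x, π' x y - ∑ x, π x y) = ∑ x, ∑ y, d₂ y * (π' x y - π x y) := by
    rw [Finset.sum_comm]
    exact Finset.sum_congr rfl fun x _ => by rw [← Finset.sum_sub_distrib, Finset.mul_sum]
  have C : ∑ x, ∑ y, (c x y * π' x y + ε * klt (μ x * ν y) (π' x y))
      + ∑ x, ∑ y, d₁ x * (π' x y - π x y) + ∑ x, ∑ y, d₂ y * (π' x y - π x y)
      = ∑ x, ∑ y, (c x y * π x y + ε * klt (μ x * ν y) (π x y))
        + ∑ x, ∑ y, ε * klt (π x y) (π' x y) := by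
    simp only [← Finset.sum_add_distrib]
    refine Finset.sum_congr rfl fun x _ => Finset.sum_congr rfl fun y _ => ?_
    rw [klt_bregman (mul_pos (hμ x) (hν y)) (hπ x y) (hπ' x y)]
    linear_combination (π' x y - π x y) * hst x y
  linarith

/-- if the restriction of a nonnegative plan `π` to each cell of a
partition `𝒥` of `X` minimizes the corresponding cell subproblem, then `π` is
the unique global minimizer of the unbalanced objective `E`. -/
theorem cellwise_optimal_implies_globally_optimal
    {X Y : Type*} [Fintype X] [Fintype Y] [Nonempty X] [Nonempty Y]
    (μ : X → ℝ) (ν : Y → ℝ) (hμ : ∀ x, 0 < μ x) (hν : ∀ y, 0 < ν y)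
    (c : X → Y → ℝ) (ε : ℝ) (hε : 0 < ε)
    (φ₁ φ₂ : ℝ → EReal) (h₁ : AssumptionA φ₁) (h₂ : AssumptionA φ₂)
    (𝒥 : Set (Set X)) (h𝒥 : Setoid.IsPartition 𝒥)
    (π : X → Y → ℝ) (hπ : ∀ x y, 0 ≤ π x y)
    (hopt : ∀ J ∈ 𝒥, ∀ π' : ↥J → Y → ℝ, (∀ (j : J) (y : Y), 0 ≤ π' j y) →
      EJfun (fun (j : J) y => c j y) ε φ₁ φ₂ (fun (j : J) => μ j) ν
          (outMarg J π) (fun (j : J) y => π j y)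
        ≤ EJfun (fun (j : J) y => c j y) ε φ₁ φ₂ (fun (j : J) => μ j) ν
          (outMarg J π) π') :
    (∀ π' : X → Y → ℝ, (∀ x y, 0 ≤ π' x y) →
        Eglobal c ε φ₁ φ₂ μ ν π ≤ Eglobal c ε φ₁ φ₂ μ ν π') ∧
    ∀ π' : X → Y → ℝ, (∀ x y, 0 ≤ π' x y) →
      (∀ π'' : X → Y → ℝ, (∀ x y, 0 ≤ π'' x y) →
          Eglobal c ε φ₁ φ₂ μ ν π' ≤ Eglobal c ε φ₁ φ₂ μ ν π'') →
      π' = π := by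
  set f₁ : ℝ → ℝ := fun s => (φ₁ s).toReal with hf₁
  set f₂ : ℝ → ℝ := fun s => (φ₂ s).toReal with hf₂
  have c₁ : ConvexOn ℝ (Set.Ici 0) f₁ := phi_convex h₁
  have c₂ : ConvexOn ℝ (Set.Ici 0) f₂ := phi_convex h₂
  have hG : ∀ x y s, 0 ≤ s →
      Gfun (c x y) ε (μ x * ν y) f₁ f₂ (μ x) (ν y) (∑ y', π x y') (∑ x', π x' y) (π x y) (π x y)
      ≤ Gfun (c x y) ε (μ x * ν y) f₁ f₂ (μ x) (ν y) (∑ y', π x y') (∑ x', π x' y) (π x y) s := by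
    intro x y s hs
    obtain ⟨J, ⟨hJ, hxJ⟩, -⟩ := h𝒥.2 x
    have hm : ∀ y, 0 ≤ outMarg J π y := fun y =>
      Finset.sum_nonneg fun x _ => Set.indicator_nonneg (fun x _ => hπ x y) x
    have hp : ∀ (j : J) (y' : Y), 0 ≤ pert (fun (j : J) y => π j y) ⟨x, hxJ⟩ y s j y' := by
      intro j y'
      unfold pert
      split_ifs
      · exact hs
      · exact hπ _ _
    have h := hopt J hJ _ hp
    rw [EJfun_coe _ ε h₁ h₂ (fun j : J => μ j) ν (fun j => hμ j) hν _ hm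
        (fun (j : J) y => π j y) (fun j y => hπ j y),
      EJfun_coe _ ε h₁ h₂ (fun j : J => μ j) ν (fun j => hμ j) hν _ hm _ hp, EReal.coe_le_coe_iff, EJr_pert] at h
    have e : (∑ j : J, π j y) + outMarg J π y = ∑ x', π x' y := sum_cell J (fun x' => π x' y)
    simp only [e] at h
    linarith
  have hpos : ∀ x y, 0 < π x y := fun x y =>
    G_pos hε (mul_pos (hμ x) (hν y)) (hμ x) (hν y) c₁ c₂
      (Finset.sum_nonneg fun y _ => hπ x y) (Finset.sum_nonneg fun x _ => hπ x y) (hπ x y) (hG x y)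
  have hd₁ : ∀ x, HasDerivAt f₁ (deriv f₁ ((∑ y, π x y) / μ x)) ((∑ y, π x y) / μ x) := fun x =>
    phi_deriv h₁ (div_pos (Finset.sum_pos (fun y _ => hpos x y) Finset.univ_nonempty) (hμ x))
  have hd₂ : ∀ y, HasDerivAt f₂ (deriv f₂ ((∑ x, π x y) / ν y)) ((∑ x, π x y) / ν y) := fun y =>
    phi_deriv h₂ (div_pos (Finset.sum_pos (fun x _ => hpos x y) Finset.univ_nonempty) (hν y))
  have hst := fun x y => G_deriv (mul_pos (hμ x) (hν y)) (hμ x) (hν y) (hpos x y)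
    (hd₁ x) (hd₂ y) (hG x y)
  have hE : ∀ π' : X → Y → ℝ, (∀ x y, 0 ≤ π' x y) → Eglobal c ε φ₁ φ₂ μ ν π'
      = ((EJr c ε f₁ f₂ μ ν (fun _ => 0) π' : ℝ) : EReal) := fun π' hπ' =>
    EJfun_coe c ε h₁ h₂ μ ν hμ hν _ (fun _ => le_rfl) π' hπ'
  have hmain := fun (π' : X → Y → ℝ) (hπ' : ∀ x y, 0 ≤ π' x y) =>
    global_ineq μ ν hμ hν c ε f₁ f₂ c₁ c₂ π π' hpos hπ' _ _ hd₁ hd₂ hst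
  have hnn : ∀ π' : X → Y → ℝ, (∀ x y, 0 ≤ π' x y) →
      ∀ x y, 0 ≤ ε * klt (π x y) (π' x y) := fun π' hπ' x y =>
    mul_nonneg hε.le (klt_nonneg (hpos x y) (hπ' x y))
  refine ⟨fun π' hπ' => ?_, fun π' hπ' hmin => ?_⟩
  · rw [hE π hπ, hE π' hπ', EReal.coe_le_coe_iff]
    have := Finset.sum_nonneg (s := Finset.univ) fun x _ =>
      Finset.sum_nonneg (s := Finset.univ) fun y _ => hnn π' hπ' x y
    linarith [hmain π' hπ']
  · have h := hmin π hπ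
    rw [hE π hπ, hE π' hπ', EReal.coe_le_coe_iff] at h
    by_contra hne
    obtain ⟨x, hx⟩ := Function.ne_iff.1 hne
    obtain ⟨y, hy⟩ := Function.ne_iff.1 hx
    have : 0 < ∑ x, ∑ y, ε * klt (π x y) (π' x y) :=
      Finset.sum_pos' (fun x _ => Finset.sum_nonneg fun y _ => hnn π' hπ' x y)
        ⟨x, Finset.mem_univ _, Finset.sum_pos' (fun y _ => hnn π' hπ' x y)
          ⟨y, Finset.mem_univ _, mul_pos hε (klt_pos (hpos x y) (hπ' x y) hy)⟩⟩
    linarith [hmain π' hπ']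

end
end
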